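/- Let N ≥ 1 and σ > 0 with 0 < Nσ ≤ 4. Then: (ii) the function m ↦ E_min(m) (with values in [-∞,∞)) is concave on (0,∞); (iii) E_min(m) ≤ -m for every m > 0; (iv) E_min(m) → 0 as m ↓ 0 and E_min(m)/m → -1 as m ↓ 0. -/

import Mathlib

open MeasureTheory Filter Topology

noncomputable section

abbrev Esp (N : ℕ) := EuclideanSpace ℝ (Fin N)

/-- Smooth compactly supported test functions. -/
def TestFun {N : ℕ} (φ : Esp N → ℂ) : Prop :=
  ContDiff ℝ (⊤ : ℕ∞) φ ∧ HasCompactSupport φ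

/-- Partial derivative in the `i`-th coordinate direction. -/
def pderivC {N : ℕ} (i : Fin N) (φ : Esp N → ℂ) : Esp N → ℂ :=
  fun x => fderiv ℝ φ x (EuclideanSpace.single i (1 : ℝ))

/-- The Laplacian of a (smooth) function. -/
def lapC {N : ℕ} (φ : Esp N → ℂ) : Esp N → ℂ :=
  fun x => ∑ i, pderivC i (pderivC i φ) x

/-- `v` is the weak `i`-th partial derivative of `u`. -/
def IsWeakPDeriv {N : ℕ} (u : Esp N → ℂ) (i : Fin N) (v : Esp N → ℂ) : Prop :=
  ∀ φ : Esp N → ℂ, TestFun φ → ∫ x, u x * pderivC i φ x = - ∫ x, v x * φ x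

/-- `v` is the weak Laplacian of `u`. -/
def IsWeakLap {N : ℕ} (u v : Esp N → ℂ) : Prop :=
  ∀ φ : Esp N → ℂ, TestFun φ → ∫ x, u x * lapC φ x = ∫ x, v x * φ x

/-- An element of the Sobolev space `H²(ℝ^N, ℂ)`: an `L²` function together with its
weak partial derivatives and its weak Laplacian, all in `L²`. -/
structure H2 (N : ℕ) where
  u : Esp N → ℂ
  grad : Fin N → Esp N → ℂ
  lapl : Esp N → ℂ
  u_mem : MemLp u 2 (volume : Measure (Esp N))
  grad_mem : ∀ i, MemLp (grad i) 2 (volume : Measure (Esp N))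
  lapl_mem : MemLp lapl 2 (volume : Measure (Esp N))
  grad_spec : ∀ i, IsWeakPDeriv u i (grad i)
  lapl_spec : IsWeakLap u lapl

namespace H2

variable {N : ℕ}

/-- `∫ |u|²`. -/
def massSq (U : H2 N) : ℝ := ∫ x, ‖U.u x‖ ^ 2

/-- `∫ |∇u|²`. -/
def gradSq (U : H2 N) : ℝ := ∑ i, ∫ x, ‖U.grad i x‖ ^ 2

/-- `∫ |Δu|²`. -/
def lapSq (U : H2 N) : ℝ := ∫ x, ‖U.lapl x‖ ^ 2

/-- `∫ |u|^{2σ+2}`. -/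
def pPow (σ : ℝ) (U : H2 N) : ℝ := ∫ x, ‖U.u x‖ ^ (2 * σ + 2)

/-- The energy `E(u) = ∫|Δu|² - 2∫|∇u|² - (1/(σ+1))∫|u|^{2σ+2}`. -/
def energy (σ : ℝ) (U : H2 N) : ℝ :=
  U.lapSq - 2 * U.gradSq - (1 / (σ + 1)) * U.pPow σ

/-- The square of the `H²` norm. -/
def h2NormSq (U : H2 N) : ℝ := U.massSq + U.gradSq + U.lapSq

/-- `u` does not vanish almost everywhere. -/
def Nontriv (U : H2 N) : Prop := ¬ (U.u =ᵐ[(volume : Measure (Esp N))] 0)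

end H2

/-- `E_min(m) = inf {E(u) : u ∈ H², ∫|u|² = m}`, with values in `EReal`. -/
def EminE (N : ℕ) (σ m : ℝ) : EReal :=
  ⨅ (U : H2 N) (_ : U.massSq = m), ((U.energy σ : ℝ) : EReal)

/-- The `L^p` norm (as a real number) of a function on `ℝ^N`. -/
def rLp {N : ℕ} (p : ℝ) (f : Esp N → ℂ) : ℝ :=
  (eLpNorm f (ENNReal.ofReal p) (volume : Measure (Esp N))).toReal


/-- The best constant `B(N,σ)` in the Gagliardo–Nirenberg–Sobolev inequality
`‖u‖_{L^{2σ+2}}^{2σ+2} ≤ B ‖Δu‖_{L²}^{Nσ/2} ‖u‖_{L²}^{2+2σ-Nσ/2}`. -/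
def GNconst (N : ℕ) (σ : ℝ) : ℝ :=
  sSup {r : ℝ | ∃ U : H2 N, U.Nontriv ∧
    r = U.pPow σ /
      (rLp 2 U.lapl ^ ((N : ℝ) * σ / 2) * rLp 2 U.u ^ (2 + 2 * σ - (N : ℝ) * σ / 2))}

/-- `k* = (σ+1)^{1/σ} B(N,σ)^{-1/σ}`. -/
def kstar (N : ℕ) (σ : ℝ) : ℝ := (σ + 1) ^ (1 / σ) * GNconst N σ ^ (-(1 / σ))

/-- Strong `H²` convergence of `v k (· + xs k)` to `U`. -/
def H2TendstoTrans {N : ℕ} (v : ℕ → H2 N) (xs : ℕ → Esp N) (U : H2 N) : Prop :=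
  Tendsto (fun k => eLpNorm (fun x => (v k).u (x + xs k) - U.u x) 2
      (volume : Measure (Esp N))) atTop (nhds 0) ∧
  (∀ i, Tendsto (fun k => eLpNorm (fun x => (v k).grad i (x + xs k) - U.grad i x) 2
      (volume : Measure (Esp N))) atTop (nhds 0)) ∧
  Tendsto (fun k => eLpNorm (fun x => (v k).lapl (x + xs k) - U.lapl x) 2
      (volume : Measure (Esp N))) atTop (nhds 0)

/-- `u` is a weak (`H^{-2}`) solution of `Δ²u + 2Δu + (1+c)u - |u|^{2σ}u = 0`. -/
def SolvesSW {N : ℕ} (σ c : ℝ) (U : H2 N) : Prop :=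
  ∀ φ : Esp N → ℂ, TestFun φ →
    (∫ x, U.lapl x * lapC φ x) + 2 * (∫ x, U.lapl x * φ x) +
        ((1 + c : ℝ) : ℂ) * (∫ x, U.u x * φ x) -
        (∫ x, ((‖U.u x‖ ^ (2 * σ) : ℝ) : ℂ) * U.u x * φ x) = 0

/-- `T_c(u) = ∫|Δu|² - 2∫|∇u|² + (1+c)∫|u|²`. -/
def Tfun {N : ℕ} (c : ℝ) (U : H2 N) : ℝ := U.lapSq - 2 * U.gradSq + (1 + c) * U.massSq

/-- `t(c) = inf {T_c(u) : ∫|u|^{2σ+2} = 1}`. -/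
def tmin (N : ℕ) (σ c : ℝ) : ℝ := sInf {r : ℝ | ∃ U : H2 N, U.pPow σ = 1 ∧ r = Tfun c U}

/-- The action `S_c(u) = E(u) + (1+c)‖u‖_{L²}² = T_c(u) - (1/(σ+1))∫|u|^{2σ+2}`. -/
def action {N : ℕ} (σ c : ℝ) (U : H2 N) : ℝ := U.energy σ + (1 + c) * U.massSq

section
open scoped FourierTransform SchwartzMap ContDiff LineDeriv ENNReal

/-- The Hilbert space `L²(ℝ^N, ℂ)`. -/
abbrev L2 (N : ℕ) := Lp (α := Esp N) ℂ 2 (volume : Measure (Esp N))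

/-- Multiplication formula for the `L²` Fourier transform. -/
lemma pair_fourier {N : ℕ} (f : L2 N) (g : 𝓢(Esp N, ℂ)) :
    ∫ x, f x * (𝓕 g) x = ∫ x, (𝓕 f : L2 N) x * g x := by
  have h := congrArg (fun T => T g) (Lp.fourier_toTemperedDistribution_eq f)
  simp only [TemperedDistribution.fourier_apply, Lp.toTemperedDistribution_apply,
    smul_eq_mul] at h
  simpa only [mul_comm] using h

/-- Multiplication formula for the inverse `L²` Fourier transform. -/
lemma pair_fourierInv {N : ℕ} (f : L2 N) (g : 𝓢(Esp N, ℂ)) :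
    ∫ x, f x * (𝓕⁻ g) x = ∫ x, (𝓕⁻ f : L2 N) x * g x := by
  have h := congrArg (fun T => T g) (Lp.fourierInv_toTemperedDistribution_eq f)
  simp only [TemperedDistribution.fourierInv_apply, Lp.toTemperedDistribution_apply,
    smul_eq_mul] at h
  simpa only [mul_comm] using h

/-- Smooth cutoff functions. -/
lemma exists_cutoff (N : ℕ) : ∃ (χ : ℕ → Esp N → ℝ) (C : ℝ), 0 ≤ C ∧
    (∀ n, ContDiff ℝ ∞ (χ n)) ∧ (∀ n, HasCompactSupport (χ n)) ∧
    (∀ n x, |χ n x| ≤ 1) ∧ (∀ n x, ‖fderiv ℝ (χ n) x‖ ≤ C) ∧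
    (∀ x, ∀ᶠ n in atTop, χ n =ᶠ[𝓝 x] fun _ => 1) := by
  let χ : ContDiffBump (0 : Esp N) := ⟨1, 2, one_pos, one_lt_two⟩
  have hcs : HasCompactSupport (χ : Esp N → ℝ) := χ.hasCompactSupport
  have hsm : ContDiff ℝ ∞ (χ : Esp N → ℝ) := χ.contDiff
  obtain ⟨C, hC⟩ := (hcs.fderiv (𝕜 := ℝ)).exists_bound_of_continuous
    (hsm.continuous_fderiv (by simp))
  have hpos : ∀ n : ℕ, (0 : ℝ) < 1 / ((n : ℝ) + 1) := fun n => by positivity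
  refine ⟨fun n x => χ ((1 / ((n : ℝ) + 1)) • x), max C 0, le_max_right _ _, ?_, ?_, ?_, ?_, ?_⟩
  · intro n
    exact hsm.comp (contDiff_const_smul _)
  · intro n
    exact hcs.comp_smul (hpos n).ne'
  · intro n x
    rw [abs_of_nonneg χ.nonneg]
    exact χ.le_one
  · intro n x
    have : fderiv ℝ (fun x => χ ((1 / ((n : ℝ) + 1)) • x)) x
        = (1 / ((n : ℝ) + 1)) • fderiv ℝ χ ((1 / ((n : ℝ) + 1)) • x) := by
      rw [fderiv_comp_smul]
    rw [this, norm_smul]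
    have h1 : ‖1 / ((n : ℝ) + 1)‖ ≤ 1 := by
      rw [Real.norm_of_nonneg (hpos n).le]
      rw [div_le_one (by positivity)]
      have : (0 : ℝ) ≤ n := Nat.cast_nonneg n
      linarith
    calc _ ≤ 1 * C := by
          apply mul_le_mul h1 (hC _) (norm_nonneg _) zero_le_one
      _ ≤ _ := by rw [one_mul]; exact le_max_left _ _
  · intro x
    filter_upwards [eventually_gt_atTop ⌈‖x‖⌉₊] with n hn
    have hx : ‖x‖ < (n : ℝ) + 1 := by
      have := Nat.le_ceil ‖x‖
      have h2 : (⌈‖x‖⌉₊ : ℝ) < n := by exact_mod_cast hn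
      linarith
    have : {y : Esp N | ‖y‖ < (n : ℝ) + 1} ∈ 𝓝 x :=
      (isOpen_lt continuous_norm continuous_const).mem_nhds hx
    filter_upwards [this] with y hy
    apply χ.one_of_mem_closedBall
    rw [mem_closedBall_zero_iff, norm_smul, Real.norm_of_nonneg (hpos n).le]
    change _ ≤ (1 : ℝ)
    rw [one_div, inv_mul_le_iff₀ (by positivity)]
    simpa using (le_of_lt hy)

/-- A first order weak identity extends from test functions to Schwartz functions. -/
lemma weak_ext {N : ℕ} {ι : Type} [Fintype ι] (e : ι → Fin N) (a : ι → Esp N → ℂ)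
    (b : Esp N → ℂ) (ha : ∀ k, MemLp (a k) 2 volume) (hb : MemLp b 2 volume)
    (h : ∀ φ : Esp N → ℂ, TestFun φ →
      ∑ k, ∫ x, a k x * pderivC (e k) φ x = - ∫ x, b x * φ x) (φ : 𝓢(Esp N, ℂ)) :
    ∑ k, ∫ x, a k x * pderivC (e k) φ x = - ∫ x, b x * φ x := by
  obtain ⟨χ, C, hC0, hsm, hcs, hle, hder, hone⟩ := exists_cutoff N
  have hpd : ∀ i : Fin N, pderivC i φ
      = (∂_{EuclideanSpace.single i (1 : ℝ)} φ : 𝓢(Esp N, ℂ)) := fun i => rfl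
  have hφd : Differentiable ℝ φ := φ.differentiable
  have hχd : ∀ n, Differentiable ℝ (χ n) := fun n => (hsm n).differentiable (by simp)
  have htest : ∀ n, TestFun (fun x => (χ n x : ℂ) * φ x) := by
    intro n
    refine ⟨?_, ?_⟩
    · exact (Complex.ofRealCLM.contDiff.comp (hsm n)).mul (φ.smooth ⊤)
    · apply HasCompactSupport.mul_right
      exact (hcs n).comp_left (g := fun r : ℝ => (r : ℂ)) rfl
  have hpn : ∀ n i x, pderivC i (fun x => (χ n x : ℂ) * φ x) x
      = (χ n x : ℂ) * pderivC i φ x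
        + (fderiv ℝ (χ n) x (EuclideanSpace.single i (1 : ℝ)) : ℂ) * φ x := by
    intro n i x
    have h1 : HasFDerivAt (fun x => (χ n x : ℂ)) (Complex.ofRealCLM.comp (fderiv ℝ (χ n) x)) x :=
      Complex.ofRealCLM.hasFDerivAt.comp x (hχd n x).hasFDerivAt
    have h2 := h1.mul (hφd x).hasFDerivAt
    unfold pderivC
    erw [h2.fderiv]
    simp [mul_comm]
  have hintg : ∀ n k, AEStronglyMeasurable
      (fun x => a k x * pderivC (e k) (fun x => (χ n x : ℂ) * φ x) x) volume := by
    intro n k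
    apply (ha k).1.mul
    apply Continuous.aestronglyMeasurable
    unfold pderivC
    exact ((htest n).1.continuous_fderiv (by simp)).clm_apply continuous_const
  have hmul : ∀ (f : Esp N → ℂ) (g : 𝓢(Esp N, ℂ)), MemLp f 2 volume →
      Integrable (fun x => ‖f x‖ * ‖g x‖) volume := by
    intro f g hf
    exact hf.norm.integrable_mul (g.memLp 2 volume).norm
  have T1 : ∀ k, Tendsto (fun n => ∫ x, a k x * pderivC (e k) (fun x => (χ n x : ℂ) * φ x) x)
      atTop (𝓝 (∫ x, a k x * pderivC (e k) φ x)) := by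
    intro k
    apply tendsto_integral_of_dominated_convergence
      (fun x => ‖a k x‖ * ‖pderivC (e k) φ x‖ + C * (‖a k x‖ * ‖φ x‖)) (fun n => hintg n k)
    · refine Integrable.add ?_ ((hmul _ _ (ha k)).const_mul C)
      rw [hpd]
      exact hmul _ _ (ha k)
    · intro n
      refine ae_of_all _ fun x => ?_
      rw [hpn, norm_mul]
      have e1 : ‖fderiv ℝ (χ n) x (EuclideanSpace.single (e k) (1 : ℝ))‖ ≤ C := by
        refine (ContinuousLinearMap.le_opNorm _ _).trans ?_
        simpa using hder n x
      have : ‖(χ n x : ℂ) * pderivC (e k) φ x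
          + (fderiv ℝ (χ n) x (EuclideanSpace.single (e k) (1 : ℝ)) : ℂ) * φ x‖
          ≤ 1 * ‖pderivC (e k) φ x‖ + C * ‖φ x‖ := by
        refine (norm_add_le _ _).trans ?_
        rw [norm_mul, norm_mul, Complex.norm_real, Complex.norm_real]
        gcongr
        exact hle n x
      calc _ ≤ ‖a k x‖ * (1 * ‖pderivC (e k) φ x‖ + C * ‖φ x‖) := by gcongr
        _ = _ := by ring
    · refine ae_of_all _ fun x => ?_
      apply tendsto_const_nhds.congr'
      filter_upwards [hone x] with n hn
      rw [hpn, hn.fderiv_eq, hn.eq_of_nhds]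
      simp
  have T2 : Tendsto (fun n => ∫ x, b x * ((χ n x : ℂ) * φ x)) atTop (𝓝 (∫ x, b x * φ x)) := by
    apply tendsto_integral_of_dominated_convergence (fun x => ‖b x‖ * ‖φ x‖)
    · intro n
      exact hb.1.mul ((htest n).1.continuous.aestronglyMeasurable)
    · exact hmul _ _ hb
    · intro n
      refine ae_of_all _ fun x => ?_
      rw [norm_mul, norm_mul, Complex.norm_real]
      have := hle n x
      calc _ ≤ ‖b x‖ * (1 * ‖φ x‖) := by gcongr; exact this
        _ = _ := by ring
    · refine ae_of_all _ fun x => ?_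
      apply tendsto_const_nhds.congr'
      filter_upwards [hone x] with n hn
      rw [hn.eq_of_nhds]
      simp
  have T3 := tendsto_finsetSum Finset.univ (fun k _ => T1 k)
  refine tendsto_nhds_unique T3 (T2.neg.congr fun n => ?_)
  rw [h _ (htest n)]

lemma growth_inner {N : ℕ} (m : Esp N) : (inner ℝ · m : Esp N → ℝ).HasTemperateGrowth :=
  ((innerSL ℝ).flip m).hasTemperateGrowth

lemma pderivC_fourier {N : ℕ} (i : Fin N) (ψ : 𝓢(Esp N, ℂ)) :
    pderivC i (𝓕 ψ : 𝓢(Esp N, ℂ)) = (𝓕 (-(2 * Real.pi * Complex.I) •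
      SchwartzMap.smulLeftCLM ℂ (inner ℝ · (EuclideanSpace.single i (1 : ℝ)) : Esp N → ℝ) ψ) :
        𝓢(Esp N, ℂ)) := by
  rw [← SchwartzMap.lineDerivOp_fourier_eq]
  rfl

lemma fourierInv_pderivC {N : ℕ} (i : Fin N) (φ : 𝓢(Esp N, ℂ)) (ξ : Esp N) :
    (𝓕⁻ (∂_{EuclideanSpace.single i (1 : ℝ)} φ : 𝓢(Esp N, ℂ)) : 𝓢(Esp N, ℂ)) ξ
      = -(2 * Real.pi * Complex.I) * ξ i * (𝓕⁻ φ : 𝓢(Esp N, ℂ)) ξ := by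
  rw [SchwartzMap.fourierInv_lineDerivOp_eq]
  rw [smul_apply, SchwartzMap.smulLeftCLM_apply_apply (growth_inner _)]
  simp [EuclideanSpace.inner_single_right, mul_assoc]

/-- Fourier side of a first order weak identity. -/
lemma weak_fourier {N : ℕ} {ι : Type} [Fintype ι] (e : ι → Fin N) (a : ι → Esp N → ℂ)
    (b : Esp N → ℂ) (ha : ∀ k, MemLp (a k) 2 volume) (hb : MemLp b 2 volume)
    (h : ∀ φ : Esp N → ℂ, TestFun φ →
      ∑ k, ∫ x, a k x * pderivC (e k) φ x = - ∫ x, b x * φ x) :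
    ∀ᵐ ξ, (𝓕 (hb.toLp b) : L2 N) ξ
      = ∑ k, 2 * Real.pi * Complex.I * ξ (e k) *
          (𝓕 ((ha k).toLp (a k)) : L2 N) ξ := by
  have hS := weak_ext e a b ha hb h
  have hloc : ∀ f : L2 N, LocallyIntegrable f volume := fun f =>
    (Lp.memLp f).locallyIntegrable one_le_two
  have hloc2 : ∀ k, LocallyIntegrable (fun ξ : Esp N => (2 * Real.pi * Complex.I * ξ (e k)) *
      (𝓕 ((ha k).toLp (a k)) : L2 N) ξ) volume := by
    intro k
    rw [← locallyIntegrableOn_univ]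
    refine LocallyIntegrableOn.continuousOn_mul ?_ ?_ isOpen_univ.isLocallyClosed
    · exact (hloc _).locallyIntegrableOn _
    · fun_prop
  apply ae_eq_of_integral_contDiff_smul_eq (hloc _)
  · exact locallyIntegrable_finsetSum _ fun k _ => hloc2 k
  · intro g hg hgc
    have hg₁ : HasCompactSupport (Complex.ofRealCLM ∘ g) := hgc.comp_left rfl
    have hg₂ : ContDiff ℝ ∞ (Complex.ofRealCLM ∘ g) := by fun_prop
    set ψ : 𝓢(Esp N, ℂ) := hg₁.toSchwartzMap hg₂ with hψ
    have key := hS (𝓕 ψ)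
    have e1 : ∫ x, b x * (𝓕 ψ) x = ∫ x, g x • (𝓕 (hb.toLp b) : L2 N) x := by
      have : ∫ x, b x * (𝓕 ψ) x = ∫ x, (hb.toLp b) x * (𝓕 ψ) x := by
        apply integral_congr_ae
        filter_upwards [hb.coeFn_toLp] with x hx
        rw [hx]
      rw [this, pair_fourier]
      congr 1
      ext x
      rw [Complex.real_smul, mul_comm]
      rfl
    have e2 : ∀ k, ∫ x, a k x * pderivC (e k) (𝓕 ψ : 𝓢(Esp N, ℂ)) x
        = - ∫ x, g x • ((2 * Real.pi * Complex.I * x (e k)) *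
          (𝓕 ((ha k).toLp (a k)) : L2 N) x) := by
      intro k
      rw [pderivC_fourier]
      have : ∀ G : 𝓢(Esp N, ℂ), ∫ x, a k x * (𝓕 G) x
          = ∫ x, ((ha k).toLp (a k)) x * (𝓕 G) x := by
        intro G
        apply integral_congr_ae
        filter_upwards [(ha k).coeFn_toLp] with x hx
        rw [hx]
      rw [this, pair_fourier, ← integral_neg]
      congr 1
      ext x
      rw [smul_apply, SchwartzMap.smulLeftCLM_apply_apply (growth_inner _)]
      simp only [EuclideanSpace.inner_single_right, Complex.real_smul, smul_eq_mul]
      have : ψ x = (g x : ℂ) := rfl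
      rw [this]
      simp
      ring
    rw [e1] at key
    simp_rw [e2] at key
    rw [Finset.sum_neg_distrib, neg_inj] at key
    rw [← key]
    simp_rw [Finset.smul_sum]
    rw [integral_finsetSum]
    intro k _
    exact (hloc2 k).integrable_smul_left_of_hasCompactSupport hg.continuous hgc

/-- The Fourier transform of `u`. -/
def H2.hat {N : ℕ} (U : H2 N) : L2 N := 𝓕 (U.u_mem.toLp U.u)

lemma H2.fourier_grad {N : ℕ} (U : H2 N) (i : Fin N) :
    ∀ᵐ ξ, (𝓕 ((U.grad_mem i).toLp (U.grad i)) : L2 N) ξ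
      = 2 * Real.pi * Complex.I * ξ i * U.hat ξ := by
  have := weak_fourier (fun _ : Unit => i) (fun _ => U.u) (U.grad i) (fun _ => U.u_mem)
    (U.grad_mem i) (by
      intro φ hφ
      simpa using U.grad_spec i φ hφ)
  simpa [H2.hat] using this

lemma TestFun.pderivC {N : ℕ} {φ : Esp N → ℂ} (hφ : TestFun φ) (i : Fin N) :
    TestFun (pderivC i φ) := by
  refine ⟨?_, ?_⟩
  · exact (hφ.1.fderiv_right (m := ∞) (by simp)).clm_apply contDiff_const
  · exact (hφ.2.fderiv_apply (𝕜 := ℝ) _)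

lemma TestFun.integrable_mul {N : ℕ} {φ u : Esp N → ℂ} (hφ : TestFun φ)
    (hu : MemLp u 2 volume) : Integrable (fun x => u x * φ x) volume :=
  hu.integrable_mul ((hφ.2.toSchwartzMap hφ.1).memLp 2 volume)

lemma H2.fourier_lapl {N : ℕ} (U : H2 N) :
    ∀ᵐ ξ, (𝓕 ((U.lapl_mem).toLp (U.lapl)) : L2 N) ξ
      = -(4 * Real.pi ^ 2 * ‖ξ‖ ^ 2 : ℝ) * U.hat ξ := by
  have := weak_fourier (fun i : Fin N => i) U.grad U.lapl U.grad_mem U.lapl_mem (by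
      intro φ hφ
      rw [← U.lapl_spec φ hφ]
      unfold lapC
      simp_rw [Finset.mul_sum]
      rw [integral_finsetSum _ fun i _ => ((hφ.pderivC i).pderivC i).integrable_mul U.u_mem,
        ← Finset.sum_neg_distrib]
      refine Finset.sum_congr rfl fun i _ => ?_
      rw [U.grad_spec i _ (hφ.pderivC i), neg_neg])
  have hg : ∀ᵐ ξ, ∀ i, (𝓕 ((U.grad_mem i).toLp (U.grad i)) : L2 N) ξ
      = 2 * Real.pi * Complex.I * ξ i * U.hat ξ := ae_all_iff.2 U.fourier_grad
  filter_upwards [this, hg] with ξ h1 h2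
  rw [h1]
  simp_rw [h2]
  rw [EuclideanSpace.norm_sq_eq, Finset.mul_sum]
  push_cast
  rw [← Finset.sum_neg_distrib, Finset.sum_mul]
  refine Finset.sum_congr rfl fun i _ => ?_
  rw [Real.norm_eq_abs, ← Complex.ofReal_pow |ξ i|, sq_abs]
  push_cast
  linear_combination (4 * Real.pi ^ 2 * (ξ i : ℂ) ^ 2 * U.hat ξ) * Complex.I_sq

lemma L2_integral_norm_sq {N : ℕ} (f : L2 N) : ∫ x, ‖f x‖ ^ 2 = ‖f‖ ^ 2 := by
  have h1 : (inner ℂ f f : ℂ) = ((‖f‖ ^ 2 : ℝ) : ℂ) := by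
    rw [inner_self_eq_norm_sq_to_K]; simp
  rw [L2.inner_def] at h1
  have h2 : ∀ x, (inner ℂ (f x) (f x) : ℂ) = ((‖f x‖ ^ 2 : ℝ) : ℂ) := by
    intro x
    rw [inner_self_eq_norm_sq_to_K]; simp
  simp_rw [h2] at h1
  rw [integral_complex_ofReal] at h1
  exact_mod_cast h1

lemma L2_integrable_norm_sq {N : ℕ} (f : L2 N) : Integrable (fun x => ‖f x‖ ^ 2) volume :=
  (Lp.memLp f).integrable_norm_pow (by norm_num)

lemma plancherel {N : ℕ} {f : Esp N → ℂ} (hf : MemLp f 2 volume) :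
    ∫ x, ‖f x‖ ^ 2 = ∫ x, ‖(𝓕 (hf.toLp f) : L2 N) x‖ ^ 2 := by
  rw [L2_integral_norm_sq, Lp.norm_fourier_eq, ← L2_integral_norm_sq]
  apply integral_congr_ae
  filter_upwards [hf.coeFn_toLp] with x hx
  rw [hx]

/-- The symbol of `-Δ`. -/
def symb {N : ℕ} (ξ : Esp N) : ℝ := 4 * Real.pi ^ 2 * ‖ξ‖ ^ 2

lemma symb_nonneg {N : ℕ} (ξ : Esp N) : 0 ≤ symb ξ := by unfold symb; positivity

namespace H2
variable {N : ℕ}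

lemma massSq_hat (U : H2 N) : U.massSq = ∫ ξ, ‖U.hat ξ‖ ^ 2 := plancherel U.u_mem

lemma integrable_hat (U : H2 N) : Integrable (fun ξ => ‖U.hat ξ‖ ^ 2) volume :=
  L2_integrable_norm_sq _

lemma lap_ae (U : H2 N) : (fun ξ => ‖(𝓕 (U.lapl_mem.toLp U.lapl) : L2 N) ξ‖ ^ 2)
    =ᵐ[volume] fun ξ => symb ξ ^ 2 * ‖U.hat ξ‖ ^ 2 := by
  filter_upwards [U.fourier_lapl] with ξ h
  rw [h, norm_mul, norm_neg, Complex.norm_real, mul_pow, Real.norm_eq_abs, sq_abs]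
  rfl

lemma lapSq_hat (U : H2 N) : U.lapSq = ∫ ξ, symb ξ ^ 2 * ‖U.hat ξ‖ ^ 2 :=
  (plancherel U.lapl_mem).trans (integral_congr_ae U.lap_ae)

lemma integrable_lap (U : H2 N) : Integrable (fun ξ => symb ξ ^ 2 * ‖U.hat ξ‖ ^ 2) volume :=
  (integrable_congr U.lap_ae).1 (L2_integrable_norm_sq _)

lemma grad_ae (U : H2 N) (i : Fin N) :
    (fun ξ => ‖(𝓕 ((U.grad_mem i).toLp (U.grad i)) : L2 N) ξ‖ ^ 2)
    =ᵐ[volume] fun ξ => 4 * Real.pi ^ 2 * ‖ξ i‖ ^ 2 * ‖U.hat ξ‖ ^ 2 := by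
  filter_upwards [U.fourier_grad i] with ξ h
  rw [h]
  simp [abs_of_pos Real.pi_pos]
  rw [← sq_abs (ξ i)]
  ring

lemma grad_sum (U : H2 N) (ξ : Esp N) :
    symb ξ * ‖U.hat ξ‖ ^ 2 = ∑ i, 4 * Real.pi ^ 2 * ‖ξ i‖ ^ 2 * ‖U.hat ξ‖ ^ 2 := by
  unfold symb
  rw [EuclideanSpace.norm_sq_eq, Finset.mul_sum, Finset.sum_mul]

lemma integrable_grad (U : H2 N) : Integrable (fun ξ => symb ξ * ‖U.hat ξ‖ ^ 2) volume := by
  simp_rw [grad_sum]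
  exact integrable_finsetSum _ fun i _ =>
    (integrable_congr (U.grad_ae i)).1 (L2_integrable_norm_sq _)

lemma gradSq_hat (U : H2 N) : U.gradSq = ∫ ξ, symb ξ * ‖U.hat ξ‖ ^ 2 := by
  simp_rw [grad_sum]
  rw [integral_finsetSum _ fun i _ =>
    (integrable_congr (U.grad_ae i)).1 (L2_integrable_norm_sq _)]
  refine Finset.sum_congr rfl fun i _ => ?_
  exact (plancherel (U.grad_mem i)).trans (integral_congr_ae (U.grad_ae i))

lemma two_gradSq_le (U : H2 N) {a : ℝ} (ha : 0 < a) :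
    2 * U.gradSq ≤ a * U.lapSq + 1 / a * U.massSq := by
  rw [gradSq_hat, lapSq_hat, massSq_hat, ← integral_const_mul, ← integral_const_mul,
    ← integral_const_mul, ← integral_add (U.integrable_lap.const_mul _)
      (U.integrable_hat.const_mul _)]
  apply integral_mono (U.integrable_grad.const_mul _)
    ((U.integrable_lap.const_mul _).add (U.integrable_hat.const_mul _))
  intro ξ
  simp only
  have h1 : 2 * symb ξ ≤ a * symb ξ ^ 2 + 1 / a := by
    have : a * symb ξ ^ 2 + 1 / a - 2 * symb ξ = (a * symb ξ - 1) ^ 2 / a := by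
      field_simp
      ring
    have h2 : 0 ≤ (a * symb ξ - 1) ^ 2 / a := by positivity
    linarith
  calc 2 * (symb ξ * ‖U.hat ξ‖ ^ 2) = (2 * symb ξ) * ‖U.hat ξ‖ ^ 2 := by ring
    _ ≤ (a * symb ξ ^ 2 + 1 / a) * ‖U.hat ξ‖ ^ 2 := by gcongr
    _ = _ := by simp only [Pi.add_apply]; ring

lemma massSq_nonneg (U : H2 N) : 0 ≤ U.massSq := integral_nonneg fun _ => by positivity
lemma lapSq_nonneg (U : H2 N) : 0 ≤ U.lapSq := integral_nonneg fun _ => by positivity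
lemma pPow_nonneg (U : H2 N) (σ : ℝ) : 0 ≤ U.pPow σ := integral_nonneg fun _ => by positivity

lemma integral_inv {h : Esp N → ℂ} (hh : MemLp h 2 volume) (φ : 𝓢(Esp N, ℂ)) :
    ∫ x, (𝓕⁻ (hh.toLp h) : L2 N) x * φ x = ∫ ξ, h ξ * (𝓕⁻ φ : 𝓢(Esp N, ℂ)) ξ := by
  rw [← pair_fourierInv]
  apply integral_congr_ae
  filter_upwards [hh.coeFn_toLp] with x hx
  rw [hx]

/-- Construct an element of `H²` from its Fourier transform. -/
def ofHat (h : Esp N → ℂ) (hh : MemLp h 2 volume)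
    (h1 : ∀ i : Fin N, MemLp (fun ξ => 2 * Real.pi * Complex.I * ξ i * h ξ) 2 volume)
    (h2 : MemLp (fun ξ : Esp N => -(symb ξ : ℂ) * h ξ) 2 volume) : H2 N where
  u := (𝓕⁻ (hh.toLp h) : L2 N)
  grad i := (𝓕⁻ ((h1 i).toLp _) : L2 N)
  lapl := (𝓕⁻ (h2.toLp _) : L2 N)
  u_mem := Lp.memLp _
  grad_mem i := Lp.memLp _
  lapl_mem := Lp.memLp _
  grad_spec i φ hφ := by
    let Φ : 𝓢(Esp N, ℂ) := hφ.2.toSchwartzMap hφ.1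
    have e1 := integral_inv hh (∂_{EuclideanSpace.single i (1 : ℝ)} Φ)
    have e2 := integral_inv (h1 i) Φ
    refine e1.trans (Eq.trans ?_ (congrArg Neg.neg e2).symm)
    rw [← integral_neg]
    congr 1
    ext ξ
    rw [fourierInv_pderivC]
    ring
  lapl_spec φ hφ := by
    let Φ : 𝓢(Esp N, ℂ) := hφ.2.toSchwartzMap hφ.1
    have e1 : ∀ i, ∫ x, (𝓕⁻ (hh.toLp h) : L2 N) x * pderivC i (pderivC i φ) x
        = ∫ ξ, h ξ * (𝓕⁻ (∂_{EuclideanSpace.single i (1 : ℝ)}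
          (∂_{EuclideanSpace.single i (1 : ℝ)} Φ)) : 𝓢(Esp N, ℂ)) ξ := fun i =>
      integral_inv hh (∂_{EuclideanSpace.single i (1 : ℝ)}
        (∂_{EuclideanSpace.single i (1 : ℝ)} Φ))
    have e2 := integral_inv h2 Φ
    refine Eq.trans ?_ e2.symm
    unfold lapC
    simp_rw [Finset.mul_sum]
    rw [integral_finsetSum _ fun i _ =>
      ((hφ.pderivC i).pderivC i).integrable_mul (Lp.memLp _)]
    simp_rw [e1]
    rw [← integral_finsetSum]
    · congr 1
      ext ξ
      simp_rw [fourierInv_pderivC]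
      unfold symb
      rw [EuclideanSpace.norm_sq_eq, Finset.mul_sum]
      push_cast
      rw [← Finset.sum_neg_distrib, Finset.sum_mul, Finset.sum_mul]
      refine Finset.sum_congr rfl fun i _ => ?_
      rw [Real.norm_eq_abs, ← Complex.ofReal_pow |ξ i|, sq_abs]
      push_cast
      linear_combination (4 * Real.pi ^ 2 * (ξ i : ℂ) ^ 2 * h ξ * (𝓕⁻ Φ : 𝓢(Esp N, ℂ)) ξ)
        * Complex.I_sq
    · intro i _
      exact hh.integrable_mul (SchwartzMap.memLp _ 2 volume)

lemma hat_ofHat (h : Esp N → ℂ) (hh : MemLp h 2 volume)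
    (h1 : ∀ i : Fin N, MemLp (fun ξ => 2 * Real.pi * Complex.I * ξ i * h ξ) 2 volume)
    (h2 : MemLp (fun ξ : Esp N => -(symb ξ : ℂ) * h ξ) 2 volume) :
    (ofHat h hh h1 h2).hat =ᵐ[volume] h := by
  have : (ofHat h hh h1 h2).hat = hh.toLp h := by
    unfold hat
    have : (ofHat h hh h1 h2).u_mem.toLp (ofHat h hh h1 h2).u = (𝓕⁻ (hh.toLp h) : L2 N) :=
      Lp.toLp_coeFn _ _
    rw [this]
    exact FourierTransform.fourier_fourierInv_eq _
  rw [this]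
  exact hh.coeFn_toLp

/-- Elements of `H²` with Fourier transform concentrated near the sphere `symb = 1`. -/
lemma exists_near (hN : 1 ≤ N) (σ : ℝ) (hσ : 0 < σ) {m ε : ℝ} (hm : 0 < m) (hε : 0 < ε) :
    ∃ U : H2 N, U.massSq = m ∧ U.energy σ ≤ -m + ε ^ 2 * m := by
  have hsc : Continuous (symb : Esp N → ℝ) := by unfold symb; fun_prop
  let S : Set (Esp N) := {ξ | |symb ξ - 1| < ε}
  have hSo : IsOpen S := isOpen_lt (by fun_prop) continuous_const
  have hSm : MeasurableSet S := hSo.measurableSet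
  have hpi := Real.pi_pos
  have hSb : ∀ ξ ∈ S, ‖ξ‖ ≤ 1 + (1 + ε) := by
    intro ξ hξ
    have h1 : symb ξ < 1 + ε := by
      have := (abs_lt.1 (show |symb ξ - 1| < ε from hξ)).2
      linarith
    have h2 : ‖ξ‖ ^ 2 ≤ symb ξ := by
      unfold symb
      have : 1 ≤ 4 * Real.pi ^ 2 := by nlinarith [Real.pi_gt_three]
      nlinarith [sq_nonneg ‖ξ‖]
    nlinarith [norm_nonneg ξ]
  have hSne : S.Nonempty := by
    refine ⟨EuclideanSpace.single ⟨0, hN⟩ (1 / (2 * Real.pi)), ?_⟩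
    change |symb _ - 1| < ε
    have : symb (EuclideanSpace.single (⟨0, hN⟩ : Fin N) (1 / (2 * Real.pi))) = 1 := by
      unfold symb
      rw [PiLp.norm_single, Real.norm_eq_abs, sq_abs]
      field_simp
      norm_num
    rw [this]
    simpa using hε
  have hSfin : volume S < ⊤ := by
    refine lt_of_le_of_lt (measure_mono (t := Metric.closedBall 0 (1 + (1 + ε))) ?_)
      measure_closedBall_lt_top
    intro ξ hξ
    simpa using hSb ξ hξ
  have hSpos : 0 < volume S := hSo.measure_pos _ hSne
  set v : ℝ := (volume S).toReal with hv
  have hvpos : 0 < v := ENNReal.toReal_pos hSpos.ne' hSfin.ne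
  set c : ℝ := Real.sqrt (m / v) with hc
  have hc2 : c ^ 2 = m / v := Real.sq_sqrt (by positivity)
  let h : Esp N → ℂ := S.indicator fun _ => (c : ℂ)
  have hmem : ∀ (w : Esp N → ℂ), Continuous w → MemLp (fun ξ => w ξ * h ξ) 2 volume := by
    intro w hw
    have e : (fun ξ => w ξ * h ξ) = S.indicator fun ξ => w ξ * c := by
      ext ξ
      by_cases hξ : ξ ∈ S <;> simp [h, hξ]
    rw [e, memLp_indicator_iff_restrict hSm]
    obtain ⟨K, hK⟩ := (isCompact_closedBall (0 : Esp N) (1 + (1 + ε))).exists_bound_of_continuousOn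
      (f := fun ξ => w ξ * c) (by fun_prop)
    have : IsFiniteMeasure (volume.restrict S) := ⟨by simpa using hSfin⟩
    refine MemLp.of_bound (by fun_prop) K ?_
    filter_upwards [ae_restrict_mem hSm] with ξ hξ
    exact hK ξ (by simpa using hSb ξ hξ)
  have hh : MemLp h 2 volume := by simpa using hmem (fun _ => 1) continuous_const
  have h1 : ∀ i : Fin N, MemLp (fun ξ => 2 * Real.pi * Complex.I * ξ i * h ξ) 2 volume :=
    fun i => hmem (fun ξ => 2 * Real.pi * Complex.I * ξ i) (by fun_prop)
  have h2 : MemLp (fun ξ : Esp N => -(symb ξ : ℂ) * h ξ) 2 volume :=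
    hmem (fun ξ => -(symb ξ : ℂ)) (by fun_prop)
  let U := ofHat h hh h1 h2
  have hU : U.hat =ᵐ[volume] h := hat_ofHat h hh h1 h2
  have hmass : U.massSq = m := by
    rw [massSq_hat]
    have : ∫ ξ, ‖U.hat ξ‖ ^ 2 = ∫ ξ, S.indicator (fun _ => c ^ 2) ξ := by
      apply integral_congr_ae
      filter_upwards [hU] with ξ hξ
      rw [hξ]
      by_cases hS : ξ ∈ S <;> simp [h, hS]
    rw [this, integral_indicator hSm, setIntegral_const, hc2, smul_eq_mul]
    change v * _ = _
    field_simp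
  refine ⟨U, hmass, ?_⟩
  have key : U.lapSq - 2 * U.gradSq + U.massSq ≤ ε ^ 2 * U.massSq := by
    rw [lapSq_hat, gradSq_hat, massSq_hat, ← integral_const_mul, ← integral_const_mul,
      ← integral_sub U.integrable_lap (U.integrable_grad.const_mul _),
      ← integral_add (f := fun ξ => symb ξ ^ 2 * ‖U.hat ξ‖ ^ 2 - 2 * (symb ξ * ‖U.hat ξ‖ ^ 2))
        (U.integrable_lap.sub (U.integrable_grad.const_mul _)) U.integrable_hat]
    apply integral_mono_ae
      ((U.integrable_lap.sub (U.integrable_grad.const_mul _)).add U.integrable_hat)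
      (U.integrable_hat.const_mul _)
    filter_upwards [hU] with ξ hξ
    simp only [Pi.add_apply, Pi.sub_apply]
    rw [hξ]
    by_cases hS : ξ ∈ S
    · have : (symb ξ - 1) ^ 2 ≤ ε ^ 2 := by
        rw [← sq_abs (symb ξ - 1)]
        have := le_of_lt (show |symb ξ - 1| < ε from hS)
        gcongr
      calc _ = (symb ξ - 1) ^ 2 * ‖h ξ‖ ^ 2 := by ring
        _ ≤ _ := by gcongr
    · simp [h, hS]
  have hp : 0 ≤ (1 / (σ + 1)) * U.pPow σ := mul_nonneg (by positivity) (U.pPow_nonneg σ)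
  unfold energy
  rw [hmass] at key
  linarith

end H2

lemma bounded_of_L1 {N : ℕ} (h : L2 N) (hh : Integrable h volume) :
    ∀ᵐ x, ‖(𝓕⁻ h : L2 N) x‖ ≤ ∫ ξ, ‖h ξ‖ := by
  let G : Esp N → ℂ := VectorFourier.fourierIntegral Real.fourierChar volume
    (-(innerₗ (Esp N))) h
  have hL : Continuous fun p : Esp N × Esp N => (-(innerₗ (Esp N))) p.1 p.2 := by
    simp only [LinearMap.neg_apply, innerₗ_apply_apply]
    fun_prop
  have hG : Continuous G :=
    VectorFourier.fourierIntegral_continuous Real.continuous_fourierChar hL hh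
  have key : (𝓕⁻ h : L2 N) =ᵐ[volume] G := by
    apply ae_eq_of_integral_contDiff_smul_eq ((Lp.memLp _).locallyIntegrable one_le_two)
      hG.locallyIntegrable
    intro g hg hgc
    have hg₁ : HasCompactSupport (Complex.ofRealCLM ∘ g) := hgc.comp_left rfl
    have hg₂ : ContDiff ℝ ∞ (Complex.ofRealCLM ∘ g) := by fun_prop
    set ψ : 𝓢(Esp N, ℂ) := hg₁.toSchwartzMap hg₂ with hψ
    have e1 := pair_fourierInv h ψ
    have e2 := VectorFourier.integral_fourierIntegral_smul_eq_flip
      (L := -(innerₗ (Esp N))) (μ := volume) (ν := volume) (f := h) (g := ψ)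
      Real.continuous_fourierChar hL hh ψ.integrable
    have e3 : ∀ x, (𝓕⁻ ψ : 𝓢(Esp N, ℂ)) x = VectorFourier.fourierIntegral Real.fourierChar volume
      (-(innerₗ (Esp N))).flip ψ x := by
      intro x
      rw [SchwartzMap.fourierInv_coe, Real.fourierInv_eq]
      simp [VectorFourier.fourierIntegral, real_inner_comm]
    simp_rw [← e3, smul_eq_mul] at e2
    calc ∫ x, g x • (𝓕⁻ h : L2 N) x = ∫ x, (𝓕⁻ h : L2 N) x * ψ x := by
          congr 1
          ext x
          rw [Complex.real_smul, mul_comm]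
          rfl
      _ = ∫ x, G x * ψ x := by rw [← e1, ← e2]
      _ = _ := by
          congr 1
          ext x
          rw [Complex.real_smul, mul_comm]
          rfl
  filter_upwards [key] with x hx
  rw [hx]
  exact VectorFourier.norm_fourierIntegral_le_integral_norm _ _ _ _ _

lemma L2_lintegral {N : ℕ} (f : L2 N) : ∫⁻ x, ‖f x‖ₑ ^ 2 = ENNReal.ofReal (‖f‖ ^ 2) := by
  rw [← L2_integral_norm_sq, ofReal_integral_eq_lintegral_ofReal (L2_integrable_norm_sq f)
    (ae_of_all _ fun _ => by positivity)]
  congr 1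
  ext x
  rw [ENNReal.ofReal_pow (norm_nonneg _), ofReal_norm]

lemma weak_level {N : ℕ} (h : L2 N) {t m : ℝ} (ht : 0 < t) (hm : 0 < m) (hhm : ‖h‖ ^ 2 = m)
    {S : Set (Esp N)} (hS : MeasurableSet S) (hSv : volume S ≤ ENNReal.ofReal (t ^ 2 / (4 * m))) :
    volume {x | t < ‖(𝓕⁻ h : L2 N) x‖} ≤
      ENNReal.ofReal (4 / t ^ 2) * ∫⁻ ξ in Sᶜ, ‖h ξ‖ₑ ^ 2 := by
  have hSfin : volume S ≠ ⊤ := (hSv.trans_lt ENNReal.ofReal_lt_top).ne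
  have hSr : volume.real S ≤ t ^ 2 / (4 * m) :=
    ENNReal.toReal_le_of_le_ofReal (by positivity) hSv
  have ha := (Lp.memLp h).indicator hS
  have hb := (Lp.memLp h).indicator hS.compl
  set a : L2 N := ha.toLp _ with hadef
  set b : L2 N := hb.toLp _ with hbdef
  have hab : h = a + b := by
    apply Lp.ext
    filter_upwards [Lp.coeFn_add a b, ha.coeFn_toLp, hb.coeFn_toLp] with x h1 h2 h3
    rw [h1, Pi.add_apply, h2, h3]
    exact (congrFun (Set.indicator_self_add_compl S h) x).symm
  have hF : (𝓕⁻ h : L2 N) = 𝓕⁻ a + 𝓕⁻ b := by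
    conv_lhs => rw [hab]
    exact FourierTransform.fourierInv_add a b
  have hpt : ∀ ξ, ‖h ξ‖ ≤ t / (4 * m) * ‖h ξ‖ ^ 2 + m / t := by
    intro ξ
    have : t / (4 * m) * ‖h ξ‖ ^ 2 + m / t - ‖h ξ‖ = (t * ‖h ξ‖ - 2 * m) ^ 2 / (4 * m * t) := by
      field_simp
      ring
    have h2 : 0 ≤ (t * ‖h ξ‖ - 2 * m) ^ 2 / (4 * m * t) := by positivity
    linarith
  have hintg : IntegrableOn (fun ξ => t / (4 * m) * ‖h ξ‖ ^ 2 + m / t) S volume :=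
    ((L2_integrable_norm_sq h).integrableOn.const_mul _).add
      (integrableOn_const hSfin)
  have hhS : IntegrableOn h S volume := by
    apply Integrable.mono' hintg (Lp.memLp h).1.restrict
    exact ae_of_all _ hpt
  have ha1 : Integrable a volume :=
    (integrable_congr ha.coeFn_toLp).2 ((integrable_indicator_iff hS).2 hhS)
  have ha2 : ∫ ξ, ‖a ξ‖ ≤ t / 2 := by
    have e : ∫ ξ, ‖a ξ‖ = ∫ ξ in S, ‖h ξ‖ := by
      rw [← integral_indicator hS]
      apply integral_congr_ae
      filter_upwards [ha.coeFn_toLp] with x hx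
      rw [hx, norm_indicator_eq_indicator_norm]
    rw [e]
    calc ∫ ξ in S, ‖h ξ‖ ≤ ∫ ξ in S, (t / (4 * m) * ‖h ξ‖ ^ 2 + m / t) :=
          integral_mono hhS.norm hintg hpt
      _ = t / (4 * m) * (∫ ξ in S, ‖h ξ‖ ^ 2) + volume.real S * (m / t) := by
          rw [integral_add ((L2_integrable_norm_sq h).integrableOn.const_mul _)
            (integrableOn_const hSfin), integral_const_mul, setIntegral_const, smul_eq_mul]
      _ ≤ t / (4 * m) * m + t ^ 2 / (4 * m) * (m / t) := by
          gcongr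
          rw [← hhm, ← L2_integral_norm_sq]
          exact setIntegral_le_integral (L2_integrable_norm_sq h)
            (ae_of_all _ fun _ => by positivity)
      _ = t / 2 := by field_simp; ring
  have hbn : ∫⁻ x, ‖(𝓕⁻ b : L2 N) x‖ₑ ^ 2 = ∫⁻ ξ in Sᶜ, ‖h ξ‖ₑ ^ 2 := by
    have hn : ‖(𝓕⁻ b : L2 N)‖ = ‖b‖ := by
      rw [← Lp.norm_fourier_eq, FourierTransform.fourier_fourierInv_eq]
    rw [L2_lintegral, hn, ← L2_lintegral,
      ← lintegral_indicator hS.compl]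
    apply lintegral_congr_ae
    filter_upwards [hb.coeFn_toLp] with x hx
    rw [hx]
    by_cases hxS : x ∈ Sᶜ
    · simp [hxS]
    · simp [hxS]
  have hsub : volume {x | t < ‖(𝓕⁻ h : L2 N) x‖} ≤
      volume {x | ENNReal.ofReal (t ^ 2 / 4) ≤ ‖(𝓕⁻ b : L2 N) x‖ₑ ^ 2} := by
    apply measure_mono_ae
    filter_upwards [bounded_of_L1 a ha1, Lp.coeFn_add (𝓕⁻ a : L2 N) (𝓕⁻ b)] with x h1 h2 hx
    change t < ‖(𝓕⁻ h : L2 N) x‖ at hx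
    rw [hF, h2, Pi.add_apply] at hx
    have h3 := norm_add_le ((𝓕⁻ a : L2 N) x) ((𝓕⁻ b : L2 N) x)
    have h4 : t / 2 ≤ ‖(𝓕⁻ b : L2 N) x‖ := by linarith
    change ENNReal.ofReal (t ^ 2 / 4) ≤ ‖(𝓕⁻ b : L2 N) x‖ₑ ^ 2
    rw [← ofReal_norm, ← ENNReal.ofReal_pow (norm_nonneg _)]
    apply ENNReal.ofReal_le_ofReal
    nlinarith
  refine hsub.trans ?_
  rw [← hbn]
  have hche := mul_meas_ge_le_lintegral₀ (μ := volume)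
    ((Lp.aestronglyMeasurable (𝓕⁻ b : L2 N)).enorm.pow_const 2) (ENNReal.ofReal (t ^ 2 / 4))
  calc volume {x | ENNReal.ofReal (t ^ 2 / 4) ≤ ‖(𝓕⁻ b : L2 N) x‖ₑ ^ 2}
      = ENNReal.ofReal (4 / t ^ 2) * (ENNReal.ofReal (t ^ 2 / 4) *
        volume {x | ENNReal.ofReal (t ^ 2 / 4) ≤ ‖(𝓕⁻ b : L2 N) x‖ₑ ^ 2}) := by
        rw [← mul_assoc, ← ENNReal.ofReal_mul (by positivity)]
        rw [show 4 / t ^ 2 * (t ^ 2 / 4) = 1 by field_simp]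
        simp
    _ ≤ _ := by gcongr

lemma level_vol {N : ℕ} (hN : 1 ≤ N) {m t : ℝ} (hm : 0 < m) (ht : 0 < t) :
    volume {ξ : Esp N | √(4 * volume.real (Metric.ball (0 : Esp N) 1) * m * ‖ξ‖ ^ N) ≤ t}
      ≤ ENNReal.ofReal (t ^ 2 / (4 * m)) := by
  set vb := volume.real (Metric.ball (0 : Esp N) 1) with hvb
  have hvb0 : 0 < vb := by
    apply ENNReal.toReal_pos (Metric.measure_ball_pos _ _ one_pos).ne' measure_ball_lt_top.ne
  have hN0 : N ≠ 0 := by omega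
  set r : ℝ := (t ^ 2 / (4 * vb * m)) ^ (1 / (N : ℝ)) with hr
  have hr0 : 0 ≤ r := by positivity
  have hrN : r ^ N = t ^ 2 / (4 * vb * m) := by
    rw [hr, one_div, Real.rpow_inv_natCast_pow (by positivity) hN0]
  have hsub : {ξ : Esp N | √(4 * vb * m * ‖ξ‖ ^ N) ≤ t} ⊆ Metric.closedBall 0 r := by
    intro ξ hξ
    rw [mem_closedBall_zero_iff]
    have h1 : 4 * vb * m * ‖ξ‖ ^ N ≤ t ^ 2 := (Real.sqrt_le_left ht.le).1 hξ
    apply le_of_pow_le_pow_left₀ hN0 hr0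
    rw [hrN, le_div_iff₀ (by positivity)]
    linarith
  refine (measure_mono hsub).trans ?_
  rw [Measure.addHaar_closedBall _ _ hr0, finrank_euclideanSpace_fin, hrN,
    ← ofReal_measureReal (measure_ball_lt_top.ne), ← hvb, ← ENNReal.ofReal_mul (by positivity)]
  apply ENNReal.ofReal_le_ofReal
  apply le_of_eq
  field_simp

lemma gn_lintegral {N : ℕ} (hN : 1 ≤ N) {σ : ℝ} (hσ : 0 < σ) (h : L2 N) {m : ℝ} (hm : 0 < m)
    (hhm : ‖h‖ ^ 2 = m) :
    ∫⁻ x, ENNReal.ofReal (‖(𝓕⁻ h : L2 N) x‖ ^ (2 * σ + 2)) ≤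
      ENNReal.ofReal (4 * (2 * σ + 2) / (2 * σ)) * ∫⁻ ξ, ‖h ξ‖ₑ ^ 2 *
        ENNReal.ofReal (√(4 * volume.real (Metric.ball (0 : Esp N) 1) * m * ‖ξ‖ ^ N) ^ (2 * σ)) := by
  set ℓ : Esp N → ℝ := fun ξ => √(4 * volume.real (Metric.ball (0 : Esp N) 1) * m * ‖ξ‖ ^ N)
    with hℓ
  have hℓc : Continuous ℓ := by
    apply Real.continuous_sqrt.comp
    fun_prop
  have hhm' : AEMeasurable (fun ξ => ‖h ξ‖ₑ ^ 2) volume :=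
    (Lp.aestronglyMeasurable h).enorm.pow_const 2
  set ν := volume.withDensity (fun ξ => ‖h ξ‖ₑ ^ 2) with hν
  have e1 : ∫⁻ ξ, ‖h ξ‖ₑ ^ 2 * ENNReal.ofReal (ℓ ξ ^ (2 * σ))
      = ∫⁻ ξ, ENNReal.ofReal (ℓ ξ ^ (2 * σ)) ∂ν := by
    rw [hν, lintegral_withDensity_eq_lintegral_mul₀ hhm']
    · rfl
    · exact ((hℓc.measurable.pow_const _).ennreal_ofReal).aemeasurable
  have e2 := lintegral_rpow_eq_lintegral_meas_lt_mul ν (f := ℓ)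
    (ae_of_all _ fun _ => Real.sqrt_nonneg _) hℓc.measurable.aemeasurable
    (p := 2 * σ) (by positivity)
  have e3 := lintegral_rpow_eq_lintegral_meas_lt_mul (volume : Measure (Esp N))
    (f := fun x => ‖(𝓕⁻ h : L2 N) x‖)
    (ae_of_all _ fun _ => norm_nonneg _) (Lp.aestronglyMeasurable (𝓕⁻ h : L2 N)).norm.aemeasurable
    (p := 2 * σ + 2) (by positivity)
  change _ ≤ _ * ∫⁻ ξ, ‖h ξ‖ₑ ^ 2 * ENNReal.ofReal (ℓ ξ ^ (2 * σ))
  rw [e1, e2, e3]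
  have key : ∫⁻ t in Set.Ioi (0 : ℝ), volume {x | t < ‖(𝓕⁻ h : L2 N) x‖} *
      ENNReal.ofReal (t ^ (2 * σ + 2 - 1)) ≤
      ENNReal.ofReal 4 * ∫⁻ t in Set.Ioi (0 : ℝ), ν {ξ | t < ℓ ξ} *
        ENNReal.ofReal (t ^ (2 * σ - 1)) := by
    rw [← lintegral_const_mul' _ _ ENNReal.ofReal_ne_top]
    apply setLIntegral_mono_ae' measurableSet_Ioi
    refine ae_of_all _ fun t ht => ?_
    have ht : 0 < t := ht
    have hS : MeasurableSet {ξ | ℓ ξ ≤ t} := measurableSet_le hℓc.measurable measurable_const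
    have hc : {ξ | ℓ ξ ≤ t}ᶜ = {ξ | t < ℓ ξ} := by
      ext ξ
      simp
    have hw := weak_level h ht hm hhm hS (level_vol hN hm ht)
    rw [hc] at hw
    rw [hν, withDensity_apply _ (by rw [← hc]; exact hS.compl)]
    refine (mul_le_mul_left hw _).trans (le_of_eq ?_)
    have : t ^ (2 * σ + 2 - 1) = t ^ 2 * t ^ (2 * σ - 1) := by
      rw [← Real.rpow_natCast, ← Real.rpow_add ht]
      congr 1
      push_cast
      ring
    rw [this, ENNReal.ofReal_mul (by positivity)]
    have h4 : ENNReal.ofReal (4 / t ^ 2) * ENNReal.ofReal (t ^ 2) = ENNReal.ofReal 4 := by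
      rw [← ENNReal.ofReal_mul (by positivity)]
      congr 1
      field_simp
    rw [← h4]
    ring
  refine (mul_le_mul_right key _).trans (le_of_eq ?_)
  rw [← mul_assoc, ← mul_assoc, ← ENNReal.ofReal_mul (by positivity),
    ← ENNReal.ofReal_mul (by positivity)]
  congr 2
  field_simp

namespace H2
variable {N : ℕ}

lemma gn (hN : 1 ≤ N) {σ : ℝ} (hσ : 0 < σ) (hcrit : (N : ℝ) * σ ≤ 4) :
    ∃ C : ℝ, 0 ≤ C ∧ ∀ U : H2 N, 0 < U.massSq →
      U.pPow σ ≤ C * U.massSq ^ σ * (U.massSq + U.lapSq) := by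
  set vb := volume.real (Metric.ball (0 : Esp N) 1) with hvb
  have hvb0 : 0 ≤ vb := measureReal_nonneg
  refine ⟨4 * (2 * σ + 2) / (2 * σ) * (4 * vb) ^ σ, by positivity, fun U hU => ?_⟩
  set m := U.massSq with hm
  have hhm : ‖U.hat‖ ^ 2 = m := by rw [hm, massSq_hat, L2_integral_norm_sq]
  have hinv : (𝓕⁻ U.hat : L2 N) = U.u_mem.toLp U.u := by
    unfold H2.hat
    rw [FourierTransform.fourierInv_fourier_eq]
  have h1 := gn_lintegral hN hσ U.hat hU hhm
  rw [hinv] at h1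
  have e1 : ∫⁻ x, ENNReal.ofReal (‖U.u_mem.toLp U.u x‖ ^ (2 * σ + 2))
      = ∫⁻ x, ENNReal.ofReal (‖U.u x‖ ^ (2 * σ + 2)) := by
    apply lintegral_congr_ae
    filter_upwards [U.u_mem.coeFn_toLp] with x hx
    rw [hx]
  rw [e1] at h1
  have hpt : ∀ ξ : Esp N, √(4 * vb * m * ‖ξ‖ ^ N) ^ (2 * σ)
      ≤ (4 * vb) ^ σ * m ^ σ * (1 + symb ξ ^ 2) := by
    intro ξ
    have a1 : √(4 * vb * m * ‖ξ‖ ^ N) ^ (2 * σ) = (4 * vb * m * ‖ξ‖ ^ N) ^ σ := by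
      rw [Real.rpow_mul (Real.sqrt_nonneg _)]
      congr 1
      rw [Real.rpow_two, Real.sq_sqrt (by positivity)]
    rw [a1, Real.mul_rpow (by positivity) (by positivity),
      Real.mul_rpow (by positivity) (by positivity)]
    gcongr
    rw [← Real.rpow_natCast, ← Real.rpow_mul (norm_nonneg _)]
    have a2 : ‖ξ‖ ^ ((N : ℝ) * σ) ≤ 1 + ‖ξ‖ ^ 4 := by
      rcases le_total ‖ξ‖ 1 with hle | hle
      · have := Real.rpow_le_one (norm_nonneg ξ) hle (z := (N : ℝ) * σ) (by positivity)
        have h4 : 0 ≤ ‖ξ‖ ^ 4 := by positivity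
        linarith
      · have := Real.rpow_le_rpow_of_exponent_le hle hcrit
        have h4 : ‖ξ‖ ^ (4 : ℝ) = ‖ξ‖ ^ (4 : ℕ) := by
          rw [← Real.rpow_natCast]
          norm_num
        rw [h4] at this
        linarith
    have a3 : ‖ξ‖ ^ 4 ≤ symb ξ ^ 2 := by
      have : ‖ξ‖ ^ 2 ≤ symb ξ := by
        unfold symb
        have hpi := Real.pi_gt_three
        have : 1 ≤ 4 * Real.pi ^ 2 := by nlinarith
        exact le_mul_of_one_le_left (by positivity) this
      calc ‖ξ‖ ^ 4 = (‖ξ‖ ^ 2) ^ 2 := by ring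
        _ ≤ _ := by gcongr
    linarith
  have e2 : ∫⁻ ξ, ‖U.hat ξ‖ₑ ^ 2 * ENNReal.ofReal (√(4 * vb * m * ‖ξ‖ ^ N) ^ (2 * σ))
      ≤ ENNReal.ofReal ((4 * vb) ^ σ * m ^ σ * (m + U.lapSq)) := by
    have hintg : Integrable (fun ξ => (4 * vb) ^ σ * m ^ σ *
        (‖U.hat ξ‖ ^ 2 + symb ξ ^ 2 * ‖U.hat ξ‖ ^ 2)) volume :=
      (U.integrable_hat.add U.integrable_lap).const_mul _
    have : (4 * vb) ^ σ * m ^ σ * (m + U.lapSq) = ∫ ξ, (4 * vb) ^ σ * m ^ σ *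
        (‖U.hat ξ‖ ^ 2 + symb ξ ^ 2 * ‖U.hat ξ‖ ^ 2) := by
      rw [integral_const_mul, integral_add U.integrable_hat U.integrable_lap, ← massSq_hat,
        ← lapSq_hat]
    rw [this, ofReal_integral_eq_lintegral_ofReal hintg (ae_of_all _ fun _ => by positivity)]
    apply lintegral_mono
    intro ξ
    change ‖U.hat ξ‖ₑ ^ 2 * _ ≤ _
    rw [← ofReal_norm, ← ENNReal.ofReal_pow (norm_nonneg _), ← ENNReal.ofReal_mul (by positivity)]
    apply ENNReal.ofReal_le_ofReal
    calc _ ≤ ‖U.hat ξ‖ ^ 2 * ((4 * vb) ^ σ * m ^ σ * (1 + symb ξ ^ 2)) := by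
          gcongr
          exact hpt ξ
      _ = _ := by ring
  have h2 := h1.trans (mul_le_mul_right e2 _)
  rw [← ENNReal.ofReal_mul (by positivity)] at h2
  have hL := U.lapSq_nonneg
  unfold pPow
  rw [integral_eq_lintegral_of_nonneg_ae (ae_of_all _ fun _ => by positivity)
    (U.u_mem.1.norm.aemeasurable.pow_const _).aestronglyMeasurable]
  refine (ENNReal.toReal_le_of_le_ofReal (by positivity) h2).trans (le_of_eq (by ring))

end H2

namespace H2
variable {N : ℕ}

/-- Multiplication of an `H²` function by a real scalar. -/
def rsmul (c : ℝ) (U : H2 N) : H2 N where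
  u x := (c : ℂ) * U.u x
  grad i x := (c : ℂ) * U.grad i x
  lapl x := (c : ℂ) * U.lapl x
  u_mem := U.u_mem.const_mul _
  grad_mem i := (U.grad_mem i).const_mul _
  lapl_mem := U.lapl_mem.const_mul _
  grad_spec i φ hφ := by
    simp_rw [mul_assoc]
    rw [integral_const_mul, integral_const_mul, U.grad_spec i φ hφ]
    ring
  lapl_spec φ hφ := by
    simp_rw [mul_assoc]
    rw [integral_const_mul, integral_const_mul, U.lapl_spec φ hφ]

lemma integral_rsmul (c : ℝ) (f : Esp N → ℂ) :
    ∫ x, ‖(c : ℂ) * f x‖ ^ 2 = c ^ 2 * ∫ x, ‖f x‖ ^ 2 := by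
  rw [← integral_const_mul]
  congr 1
  ext x
  rw [norm_mul, mul_pow, Complex.norm_real, Real.norm_eq_abs, sq_abs]

lemma massSq_rsmul (c : ℝ) (U : H2 N) : (U.rsmul c).massSq = c ^ 2 * U.massSq :=
  integral_rsmul c U.u

lemma energy_rsmul {σ s : ℝ} (hσ : 0 < σ) (hs : 0 ≤ s) (U : H2 N) :
    (U.rsmul √s).energy σ = s * (U.lapSq - 2 * U.gradSq)
      - s ^ (σ + 1) * (1 / (σ + 1) * U.pPow σ) := by
  have h1 : (U.rsmul √s).lapSq = s * U.lapSq := by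
    have := integral_rsmul √s U.lapl
    rw [Real.sq_sqrt hs] at this
    exact this
  have h2 : (U.rsmul √s).gradSq = s * U.gradSq := by
    unfold gradSq
    rw [Finset.mul_sum]
    refine Finset.sum_congr rfl fun i _ => ?_
    have := integral_rsmul √s (U.grad i)
    rw [Real.sq_sqrt hs] at this
    exact this
  have h3 : (U.rsmul √s).pPow σ = s ^ (σ + 1) * U.pPow σ := by
    unfold pPow
    rw [← integral_const_mul]
    congr 1
    ext x
    change ‖(√s : ℂ) * U.u x‖ ^ (2 * σ + 2) = _
    rw [norm_mul, Complex.norm_real, Real.norm_eq_abs, abs_of_nonneg (Real.sqrt_nonneg _),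
      Real.mul_rpow (Real.sqrt_nonneg _) (norm_nonneg _)]
    congr 1
    rw [show 2 * σ + 2 = 2 * (σ + 1) by ring, Real.rpow_mul (Real.sqrt_nonneg _), Real.rpow_two,
      Real.sq_sqrt hs]
  unfold energy
  rw [h1, h2, h3]
  ring

end H2

lemma EminE_le {N : ℕ} {σ m : ℝ} (U : H2 N) (hU : U.massSq = m) :
    EminE N σ m ≤ (U.energy σ : EReal) := iInf₂_le U hU

lemma EminE_concave {N : ℕ} {σ : ℝ} (hσ : 0 < σ) (m₁ m₂ θ : ℝ) (h₁ : 0 < m₁) (h₂ : 0 < m₂)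
    (hθ0 : 0 ≤ θ) (hθ1 : θ ≤ 1) :
    (θ : EReal) * EminE N σ m₁ + ((1 - θ : ℝ) : EReal) * EminE N σ m₂ ≤
        EminE N σ (θ * m₁ + (1 - θ) * m₂) := by
  set M := θ * m₁ + (1 - θ) * m₂ with hM
  have hM0 : 0 < M := by
    have := (convex_Ioi (0 : ℝ)) h₁ h₂ hθ0 (sub_nonneg.2 hθ1) (by ring)
    simpa using this
  refine le_iInf₂ fun U hU => ?_
  have hmass : ∀ m : ℝ, 0 < m → (U.rsmul √(m / M)).massSq = m := by
    intro m hm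
    rw [H2.massSq_rsmul, Real.sq_sqrt (by positivity), hU]
    field_simp
  have b1 := EminE_le (σ := σ) _ (hmass m₁ h₁)
  have b2 := EminE_le (σ := σ) _ (hmass m₂ h₂)
  have c1 : (0 : EReal) ≤ (θ : EReal) := by exact_mod_cast hθ0
  have c2 : (0 : EReal) ≤ ((1 - θ : ℝ) : EReal) := by exact_mod_cast sub_nonneg.2 hθ1
  refine (add_le_add (mul_le_mul_of_nonneg_left b1 c1) (mul_le_mul_of_nonneg_left b2 c2)).trans ?_
  rw [← EReal.coe_mul, ← EReal.coe_mul, ← EReal.coe_add, EReal.coe_le_coe_iff,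
    H2.energy_rsmul hσ (by positivity), H2.energy_rsmul hσ (by positivity)]
  have hs : θ * (m₁ / M) + (1 - θ) * (m₂ / M) = 1 := by
    field_simp
    exact hM.symm
  have hconv := (convexOn_rpow (show 1 ≤ σ + 1 by linarith)).2
    (show m₁ / M ∈ Set.Ici (0 : ℝ) from (by positivity : (0 : ℝ) ≤ m₁ / M))
    (show m₂ / M ∈ Set.Ici (0 : ℝ) from (by positivity : (0 : ℝ) ≤ m₂ / M))
    hθ0 (sub_nonneg.2 hθ1) (by ring)
  simp only [smul_eq_mul, hs, Real.one_rpow] at hconv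
  have hb : 0 ≤ 1 / (σ + 1) * U.pPow σ := mul_nonneg (by positivity) (U.pPow_nonneg σ)
  have hfin := mul_le_mul_of_nonneg_right hconv hb
  have hlin : θ * (m₁ / M * (U.lapSq - 2 * U.gradSq)) + (1 - θ) * (m₂ / M *
      (U.lapSq - 2 * U.gradSq)) = U.lapSq - 2 * U.gradSq := by
    linear_combination (U.lapSq - 2 * U.gradSq) * hs
  change _ ≤ U.lapSq - 2 * U.gradSq - 1 / (σ + 1) * U.pPow σ
  linarith

lemma EminE_upper {N : ℕ} (hN : 1 ≤ N) {σ : ℝ} (hσ : 0 < σ) (m : ℝ) (hm : 0 < m) :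
    EminE N σ m ≤ ((-m : ℝ) : EReal) := by
  have hT : Tendsto (fun ε : ℝ => ((-m + ε ^ 2 * m : ℝ) : EReal)) (𝓝[>] 0)
      (𝓝 ((-m : ℝ) : EReal)) := by
    apply (continuous_coe_real_ereal.tendsto _).comp
    have : Continuous fun ε : ℝ => -m + ε ^ 2 * m := by fun_prop
    have h := this.tendsto 0
    simp only [ne_eq, OfNat.ofNat_ne_zero, not_false_eq_true, zero_pow, zero_mul, add_zero] at h
    exact h.mono_left nhdsWithin_le_nhds
  refine ge_of_tendsto hT ?_
  filter_upwards [self_mem_nhdsWithin] with ε hε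
  obtain ⟨U, hU1, hU2⟩ := H2.exists_near hN σ hσ hm hε
  exact (EminE_le U hU1).trans (EReal.coe_le_coe_iff.2 hU2)

lemma EminE_lower {N : ℕ} (hN : 1 ≤ N) {σ : ℝ} (hσ : 0 < σ) (hcrit : (N : ℝ) * σ ≤ 4) :
    ∃ C : ℝ, ∀ m : ℝ, 0 < m → C * m ^ σ < 1 →
      ((-(m * (1 / (1 - C * m ^ σ) + C * m ^ σ)) : ℝ) : EReal) ≤ EminE N σ m := by
  obtain ⟨C, hC, h⟩ := H2.gn hN hσ hcrit
  refine ⟨C / (σ + 1), fun m hm hlt => le_iInf₂ fun U hU => ?_⟩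
  rw [EReal.coe_le_coe_iff]
  have h1 := h U (by rw [hU]; exact hm)
  rw [hU] at h1
  have h2 := U.two_gradSq_le (sub_pos.2 hlt)
  rw [hU] at h2
  have h3 : 1 / (σ + 1) * U.pPow σ ≤ C / (σ + 1) * m ^ σ * (m + U.lapSq) := by
    calc _ ≤ 1 / (σ + 1) * (C * m ^ σ * (m + U.lapSq)) := by gcongr
      _ = _ := by ring
  unfold H2.energy
  nlinarith

lemma EminE_limits {N : ℕ} (hN : 1 ≤ N) {σ : ℝ} (hσ : 0 < σ) (hcrit : (N : ℝ) * σ ≤ 4) :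
    Tendsto (fun m : ℝ => EminE N σ m) (nhdsWithin 0 (Set.Ioi 0)) (nhds (0 : EReal)) ∧
    Tendsto (fun m : ℝ => EminE N σ m / ((m : ℝ) : EReal)) (nhdsWithin 0 (Set.Ioi 0))
      (nhds (-1 : EReal)) := by
  obtain ⟨C, hC⟩ := EminE_lower hN hσ hcrit
  have hid : Tendsto (fun m : ℝ => m) (𝓝[>] 0) (𝓝 0) := tendsto_nhdsWithin_of_tendsto_nhds tendsto_id
  have hδ : Tendsto (fun m : ℝ => C * m ^ σ) (𝓝[>] 0) (𝓝 0) := by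
    have := (hid.rpow_const (p := σ) (Or.inr hσ.le)).const_mul C
    rwa [Real.zero_rpow hσ.ne', mul_zero] at this
  have hk : Tendsto (fun m : ℝ => 1 / (1 - C * m ^ σ) + C * m ^ σ) (𝓝[>] 0) (𝓝 1) := by
    have := ((tendsto_const_nhds (x := (1 : ℝ))).div ((tendsto_const_nhds (x := (1 : ℝ))).sub hδ)
      (by norm_num)).add hδ
    simpa using this
  have hev : ∀ᶠ m : ℝ in 𝓝[>] 0, 0 < m ∧ C * m ^ σ < 1 :=
    (eventually_mem_nhdsWithin).and (hδ.eventually_lt_const one_pos)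
  constructor
  · refine tendsto_of_tendsto_of_tendsto_of_le_of_le'
      (g := fun m : ℝ => ((-(m * (1 / (1 - C * m ^ σ) + C * m ^ σ)) : ℝ) : EReal))
      (h := fun m : ℝ => ((-m : ℝ) : EReal)) ?_ ?_ ?_ ?_
    · have := (hid.mul hk).neg
      rw [zero_mul, neg_zero] at this
      exact (continuous_coe_real_ereal.tendsto _).comp this
    · have := hid.neg
      rw [neg_zero] at this
      exact (continuous_coe_real_ereal.tendsto _).comp this
    · filter_upwards [hev] with m hm using hC m hm.1 hm.2
    · filter_upwards [hev] with m hm using EminE_upper hN hσ m hm.1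
  · refine tendsto_of_tendsto_of_tendsto_of_le_of_le'
      (g := fun m : ℝ => ((-(1 / (1 - C * m ^ σ) + C * m ^ σ) : ℝ) : EReal))
      (h := fun m : ℝ => (-1 : EReal)) ?_ tendsto_const_nhds ?_ ?_
    · exact (continuous_coe_real_ereal.tendsto _).comp hk.neg
    · filter_upwards [hev] with m hm
      have h1 := EReal.div_le_div_right_of_nonneg (c := (m : EReal))
        (by exact_mod_cast hm.1.le) (hC m hm.1 hm.2)
      rw [← EReal.coe_div] at h1
      have h0 := hm.1.ne'
      rwa [neg_div, mul_div_cancel_left₀ _ h0] at h1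
    · filter_upwards [hev] with m hm
      have h1 := EReal.div_le_div_right_of_nonneg (c := (m : EReal))
        (by exact_mod_cast hm.1.le) (EminE_upper hN hσ m hm.1)
      rw [← EReal.coe_div] at h1
      have h0 := hm.1.ne'
      rwa [neg_div, div_self h0] at h1

end

/-- For `0 < Nσ ≤ 4`: `E_min` is concave on `(0,∞)` (with values in
`[-∞,∞)`), `E_min(m) ≤ -m`, `E_min(m) → 0` and `E_min(m)/m → -1` as `m ↓ 0`. -/
theorem stmt5 (N : ℕ) (σ : ℝ) (hN : 1 ≤ N) (hσ : 0 < σ) (hcrit : (N : ℝ) * σ ≤ 4) :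
    (∀ m₁ m₂ θ : ℝ, 0 < m₁ → 0 < m₂ → 0 ≤ θ → θ ≤ 1 →
      (θ : EReal) * EminE N σ m₁ + ((1 - θ : ℝ) : EReal) * EminE N σ m₂ ≤
        EminE N σ (θ * m₁ + (1 - θ) * m₂)) ∧
    (∀ m : ℝ, 0 < m → EminE N σ m ≤ ((-m : ℝ) : EReal)) ∧
    Tendsto (fun m : ℝ => EminE N σ m) (nhdsWithin 0 (Set.Ioi 0)) (nhds (0 : EReal)) ∧
    Tendsto (fun m : ℝ => EminE N σ m / ((m : ℝ) : EReal)) (nhdsWithin 0 (Set.Ioi 0))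
      (nhds (-1 : EReal)) := by
  exact ⟨fun m₁ m₂ θ h₁ h₂ h0 h1 => EminE_concave hσ m₁ m₂ θ h₁ h₂ h0 h1,
    fun m hm => EminE_upper hN hσ m hm, EminE_limits hN hσ hcrit⟩

end
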